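/- Let α be a nonzero algebraic number, h the order of the group of roots of unity in the splitting field of its minimal polynomial over ℚ, and ζ a primitive h-th root of unity. Then Tr_{ℚ(α,ζ)/ℚ(α^h,ζ)}(α^n) = 0 for infinitely many n ∈ ℕ if and only if α ∉ ℚ(α^h, ζ). -/

import Mathlib

open IntermediateField

lemma aux_torsion_finite (K : Type*) [Field K] [NumberField K] :
    Finite (CommGroup.torsion Kˣ) := by
  have hf := NumberField.Embeddings.finite_of_norm_le K ℂ 1
  have : Finite {x : K | IsIntegral ℤ x ∧ ∀ φ : K →+* ℂ, ‖φ x‖ ≤ 1} := hf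
  have hm : ∀ u : CommGroup.torsion Kˣ, ((u : Kˣ) : K) ∈
      {x : K | IsIntegral ℤ x ∧ ∀ φ : K →+* ℂ, ‖φ x‖ ≤ 1} := by
    intro u
    obtain ⟨n, hn, hu⟩ := isOfFinOrder_iff_pow_eq_one.1 ((CommGroup.mem_torsion _).1 u.2)
    have hu' : ((u : Kˣ) : K) ^ n = 1 := by
      rw [← Units.val_pow_eq_pow_val, hu, Units.val_one]
    refine ⟨IsIntegral.of_pow hn (by rw [hu']; exact isIntegral_one), fun φ => ?_⟩
    refine le_of_eq (Complex.norm_eq_one_of_pow_eq_one (n := n) ?_ hn.ne')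
    rw [← map_pow, hu', map_one]
  refine Finite.of_injective (β := {x : K | IsIntegral ℤ x ∧ ∀ φ : K →+* ℂ, ‖φ x‖ ≤ 1})
    (fun u => ⟨((u : Kˣ) : K), hm u⟩) ?_
  intro u v huv
  exact Subtype.ext (Units.ext (congrArg Subtype.val huv))

lemma aux_key {K E : Type*} [Field K] [Field E] [CharZero K] [Algebra K E]
    (g : E) (hg : K⟮g⟯ = ⊤) (h : ℕ) (h0 : h ≠ 0) (ζ : K) (hζ : IsPrimitiveRoot ζ h)
    (a : K) (ha : g ^ h = algebraMap K E a) (hgn : g ∉ Set.range (algebraMap K E)) :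
    {n : ℕ | Algebra.trace K E (g ^ n) = 0}.Infinite := by
  have hζE : IsPrimitiveRoot (algebraMap K E ζ) h :=
    hζ.map_of_injective (algebraMap K E).injective
  have hsp : Polynomial.IsSplittingField K E (Polynomial.X ^ h - Polynomial.C a) := by
    rw [isSplittingField_iff_intermediateField]
    constructor
    · simpa using X_pow_sub_C_splits_of_isPrimitiveRoot hζE ha
    · rw [eq_top_iff, ← hg]
      apply IntermediateField.adjoin.mono
      rw [Set.singleton_subset_iff, Polynomial.mem_rootSet]
      exact ⟨Polynomial.X_pow_sub_C_ne_zero (Nat.pos_of_ne_zero h0) a, by simp [ha]⟩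
  have := Polynomial.IsSplittingField.finiteDimensional E (Polynomial.X ^ h - Polynomial.C a)
  have hnor : Normal K E := Normal.of_isSplittingField (Polynomial.X ^ h - Polynomial.C a)
  have hgal : IsGalois K E := ⟨⟩
  have h1 : ¬ ∀ f : E ≃ₐ[K] E, f g = g := by
    rw [← IsGalois.mem_bot_iff_fixed, IntermediateField.mem_bot]
    exact hgn
  push Not at h1
  obtain ⟨f, hf⟩ := h1
  have hg0 : g ≠ 0 := by
    rintro rfl
    exact hgn ⟨0, map_zero _⟩
  have : NeZero h := ⟨h0⟩
  have hpow : (f g / g) ^ h = 1 := by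
    rw [div_pow, ← map_pow, ha, f.commutes, ← ha, div_self (pow_ne_zero _ hg0)]
  obtain ⟨i, -, hi⟩ := hζE.eq_pow_of_pow_eq_one hpow
  have hfg : f g = algebraMap K E (ζ ^ i) * g := by
    rw [map_pow, hi, div_mul_cancel₀ _ hg0]
  have hne : ζ ^ i ≠ 1 := by
    intro hh
    rw [hh, map_one, one_mul] at hfg
    exact hf hfg
  refine Set.infinite_of_injective_forall_mem (f := fun k : ℕ => h * k + 1) ?_ ?_
  · intro x y hxy
    simpa [h0] using hxy
  · intro k
    have e1 : f (g ^ (h * k + 1)) = ζ ^ i • g ^ (h * k + 1) := by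
      rw [map_pow, hfg, mul_pow, ← map_pow, Algebra.smul_def]
      congr 2
      rw [pow_succ, ← pow_mul, mul_left_comm, pow_mul, hζ.pow_eq_one]
      simp
    have e2 := Algebra.trace_eq_of_algEquiv f (g ^ (h * k + 1))
    rw [e1, map_smul, smul_eq_mul] at e2
    have e3 : (ζ ^ i - 1) * Algebra.trace K E (g ^ (h * k + 1)) = 0 := by
      rw [sub_mul, e2]; simp
    exact (mul_eq_zero.1 e3).resolve_left (sub_ne_zero.2 hne)

/-- Theorem 6 (int3): for a nonzero algebraic `α`, with `h` the order of the group of roots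
of unity of the splitting field of its minimal polynomial and `ζ` a primitive `h`-th root of
unity, `Tr_{ℚ(α,ζ)/ℚ(α^h,ζ)}(αⁿ) = 0` for infinitely many `n` iff `α ∉ ℚ(α^h, ζ)`. -/
theorem zero_trace_infinitely_often (α : ℂ) (hα : α ≠ 0) (halg : IsAlgebraic ℚ α)
    (h : ℕ)
    (hh : h = Nat.card (CommGroup.torsion ((minpoly ℚ α).SplittingFieldˣ)))
    (ζ : ℂ) (hζ : IsPrimitiveRoot ζ h)
    (L : IntermediateField ℚ ℂ) (hL : L = IntermediateField.adjoin ℚ {α ^ h, ζ}) :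
    {n : ℕ | Algebra.trace L (IntermediateField.adjoin L {α})
        ((IntermediateField.AdjoinSimple.gen L α) ^ n) = 0}.Infinite
      ↔ α ∉ L := by
  have hh0 : h ≠ 0 := by
    have : NumberField (minpoly ℚ α).SplittingField := NumberField.mk
    have := aux_torsion_finite (minpoly ℚ α).SplittingField
    rw [hh]
    exact Nat.card_pos.ne'
  have hζL : ζ ∈ L := by
    rw [hL]; exact IntermediateField.subset_adjoin _ _ (by simp)
  have haL : α ^ h ∈ L := by
    rw [hL]; exact IntermediateField.subset_adjoin _ _ (by simp)
  constructor
  · intro hinf hαL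
    obtain ⟨n, hn⟩ := hinf.nonempty
    have hint : IsIntegral L α := (halg.tower_top L).isIntegral
    have : FiniteDimensional L L⟮α⟯ := IntermediateField.adjoin.finiteDimensional hint
    have e : AdjoinSimple.gen L α = algebraMap L L⟮α⟯ ⟨α, hαL⟩ := Subtype.ext rfl
    rw [Set.mem_ofPred_eq, e, ← map_pow, Algebra.trace_algebraMap, smul_eq_zero] at hn
    rcases hn with hn | hn
    · exact Module.finrank_pos.ne' hn
    · exact hα (congrArg Subtype.val (eq_zero_of_pow_eq_zero hn))
  · intro hαL
    refine aux_key (AdjoinSimple.gen L α) ?_ h hh0 ⟨ζ, hζL⟩ ?_ ⟨α ^ h, haL⟩ ?_ ?_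
    · apply IntermediateField.lift_injective L⟮α⟯
      rw [IntermediateField.lift_top, IntermediateField.lift_adjoin_simple]
      rfl
    · exact IsPrimitiveRoot.of_map_of_injective (f := algebraMap L ℂ) hζ (algebraMap L ℂ).injective
    · exact Subtype.ext rfl
    · rintro ⟨x, hx⟩
      apply hαL
      have : (x : ℂ) = α := congrArg Subtype.val hx
      rw [← this]; exact x.2
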